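/- Let A be a skew left brace and suppose A = B + C, where B and C are (not necessarily strong) left ideals of A that are trivial as skew left braces. Then the ideal A^(2) = A*A of A is meta-trivial, i.e., the skew left brace A^(2) is such that (A^(2))*(A^(2)) is trivial as a skew left brace; consequently A has a meta-trivial ideal I (namely I = A^(2)) such that A/I is a trivial skew left brace. -/

import Mathlib

/-- A skew left brace: `(A,+)` and `(A,∘)` are groups (sharing the same identity `0`)
such that `a ∘ (b + c) = a ∘ b - a + a ∘ c`.  Here `circ` is the operation `∘` and
`cinv a` is the inverse of `a` in `(A,∘)`. -/
class SkewBrace (A : Type*) extends AddGroup A where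
  circ : A → A → A
  cinv : A → A
  circ_assoc : ∀ a b c : A, circ (circ a b) c = circ a (circ b c)
  zero_circ : ∀ a : A, circ 0 a = a
  circ_zero : ∀ a : A, circ a 0 = a
  cinv_circ : ∀ a : A, circ (cinv a) a = 0
  circ_cinv : ∀ a : A, circ a (cinv a) = 0
  compat : ∀ a b c : A, circ a (b + c) = circ a b + -a + circ a c

open SkewBrace

/-- `lam a b = -a + a ∘ b`. -/
def lam {A : Type*} [SkewBrace A] (a b : A) : A := -a + circ a b

/-- The star operation `a * b = lam a b - b = -a + a ∘ b - b`. -/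
def bstar {A : Type*} [SkewBrace A] (a b : A) : A := lam a b - b

/-- `X * Y`: the subgroup of `(A,+)` generated by `{x * y : x ∈ X, y ∈ Y}`. -/
def starSpan {A : Type*} [SkewBrace A] (X Y : Set A) : AddSubgroup A :=
  AddSubgroup.closure {z | ∃ x ∈ X, ∃ y ∈ Y, z = bstar x y}

/-- The right series of `st`: `rseriesOf st 0 = A = A^(1)` and
`rseriesOf st n = A^(n+1)`, so that `A^(n+1) = A^(n) * A`. -/
def rseriesOf {G : Type*} [AddGroup G] (st : G → G → G) : ℕ → AddSubgroup G
  | 0 => ⊤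
  | n + 1 => AddSubgroup.closure {z | ∃ u ∈ rseriesOf st n, ∃ a : G, z = st u a}

/-! Write `λ` for `lam` and `*` for `bstar`. On `C`, the map `λ_a` depends only on the `B`-part of
`a`, so `A * C = B * C ⊆ C`, and symmetrically `A * B = C * B ⊆ B`. Both are normal in `(A,+)`,
hence `A^(2) = C * B + B * C`. An element of `B ∩ C` acts trivially on both factors, so `B ∩ C ⊆
ker λ`; in particular `ker λ` contains the additive commutator `[C * B, B * C]`. Let `x ∈ C * B`
and `y ∈ B * C`. Modulo this commutator `x ∘ y = x + λ_x(y)` agrees with `λ_x(y) + x`; since `x`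
acts trivially on `B`, it follows that `λ_x(y)` and `y` act identically on `B`, which gives `x * y
∈ ker λ`. Therefore `A^(2) * A^(2) ⊆ ker λ`, and the two operations agree on `ker λ`. -/

open scoped addCommutatorElement

namespace SkewBrace

variable {A : Type*} [SkewBrace A]

theorem circ_eq_add_lam (a b : A) : circ a b = a + lam a b := by
  rw [lam, add_neg_cancel_left]

theorem lam_add (a b c : A) : lam a (b + c) = lam a b + lam a c := by
  simp only [lam, compat, add_assoc]

/-- The map `λ_a` as an additive endomorphism of `A`, giving access to the `map_*` lemmas and to
preimages of additive subgroups. -/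
def lamHom (a : A) : A →+ A := AddMonoidHom.mk' (lam a) (lam_add a)

theorem lam_sub (a b c : A) : lam a (b - c) = lam a b - lam a c :=
  map_sub (lamHom a) b c

theorem zero_lam (a : A) : lam 0 a = a := by
  rw [lam, zero_circ, neg_zero, zero_add]

theorem lam_circ (a b c : A) : lam (circ a b) c = lam a (lam b c) := by
  have h : circ a b + lam (circ a b) c = circ a b + lam a (lam b c) := by
    calc circ a b + lam (circ a b) c = circ a (circ b c) := by
          rw [← circ_eq_add_lam, circ_assoc]
      _ = circ a b + lam a (lam b c) := by
          rw [circ_eq_add_lam b c, circ_eq_add_lam a, lam_add, ← add_assoc, ← circ_eq_add_lam]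
  exact add_left_cancel h

theorem lam_lam_cinv (a b : A) : lam a (lam (cinv a) b) = b := by
  rw [← lam_circ, circ_cinv, zero_lam]

theorem lam_cinv_lam (a b : A) : lam (cinv a) (lam a b) = b := by
  rw [← lam_circ, cinv_circ, zero_lam]

theorem lam_cinv_self (a : A) : lam a (cinv a) = -a := by
  rw [lam, circ_cinv, add_zero]

theorem add_eq_circ_lam_cinv (a b : A) : a + b = circ a (lam (cinv a) b) := by
  rw [circ_eq_add_lam, lam_lam_cinv]

variable (A) in
/-- The kernel of `a ↦ λ_a`. It is a subgroup of `(A,+)` as well as of `(A,∘)`, because the two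
operations agree on it. -/
def lamKer : AddSubgroup A where
  carrier := {k | ∀ a, lam k a = a}
  zero_mem' := zero_lam
  add_mem' {k l} hk hl a := by
    have add_eq_circ : k + l = circ k l := by rw [circ_eq_add_lam, hk]
    rw [add_eq_circ, lam_circ, hl, hk]
  neg_mem' {k} hk a := by
    have cinv_eq : cinv k = -k := by rw [← lam_cinv_self, hk]
    calc lam (-k) a = lam (cinv k) (lam k a) := by rw [cinv_eq, hk]
      _ = a := lam_cinv_lam k a

theorem lam_add_of_mem_lamKer {k : A} (hk : k ∈ lamKer A) (a b : A) :
    lam (k + a) b = lam a b := by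
  rw [← hk a, ← circ_eq_add_lam, lam_circ, hk, hk]

theorem bstar_add (a b c : A) : bstar a (b + c) = bstar a b + (b + bstar a c + -b) := by
  simp [bstar, lam_add, sub_eq_add_neg, add_assoc]

theorem add_bstar_add_neg (a b c : A) :
    b + bstar a c + -b = -bstar a b + bstar a (b + c) := by
  rw [bstar_add, neg_add_cancel_left]

theorem lam_eq_bstar_add (a b : A) : lam a b = bstar a b + b :=
  (sub_add_cancel _ _).symm

theorem lam_bstar (a b c : A) :
    lam a (bstar b c) = bstar (circ (circ a b) (cinv a)) (lam a c) := by
  simp only [bstar, lam_sub, lam_circ, lam_cinv_lam]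

theorem bstar_mem_starSpan {X Y : Set A} {x y : A} (hx : x ∈ X) (hy : y ∈ Y) :
    bstar x y ∈ starSpan X Y :=
  AddSubgroup.subset_closure ⟨x, hx, y, hy, rfl⟩

theorem starSpan_le {X Y : Set A} {H : AddSubgroup A} :
    starSpan X Y ≤ H ↔ ∀ x ∈ X, ∀ y ∈ Y, bstar x y ∈ H := by
  rw [starSpan, AddSubgroup.closure_le]
  exact ⟨fun h x hx y hy => h ⟨x, hx, y, hy, rfl⟩,
    fun h _ ⟨x, hx, y, hy, hz⟩ => hz ▸ h x hx y hy⟩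

theorem le_normalizer_starSpan_iff {X Y : Set A} {H : AddSubgroup A} :
    H ≤ AddSubgroup.normalizer (starSpan X Y) ↔
      ∀ a ∈ H, ∀ x ∈ X, ∀ y ∈ Y, a + bstar x y + -a ∈ starSpan X Y := by
  rw [starSpan, AddSubgroup.le_normalizer_closure_iff]
  exact ⟨fun h a ha x hx y hy => h a ha _ ⟨x, hx, y, hy, rfl⟩,
    fun h a ha _ ⟨x, hx, y, hy, hz⟩ => hz ▸ h a ha x hx y hy⟩

theorem le_normalizer_starSpan (X : Set A) (I : AddSubgroup A) :
    I ≤ AddSubgroup.normalizer (starSpan X (I : Set A)) := by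
  refine le_normalizer_starSpan_iff.2 fun a ha x hx y hy => ?_
  rw [add_bstar_add_neg]
  exact add_mem (neg_mem (bstar_mem_starSpan hx ha)) (bstar_mem_starSpan hx (add_mem ha hy))

/-- Left ideals of a skew left brace: additive subgroups stable under every `λ_a`. -/
def IsLeftIdeal (I : AddSubgroup A) : Prop := ∀ a : A, ∀ x ∈ I, lam a x ∈ I

/-- Ideals of a skew left brace: left ideals that are normal for both group structures. -/
structure IsIdeal (I : AddSubgroup A) : Prop where
  isLeftIdeal : IsLeftIdeal I
  normal : I.Normal
  circ_conj_mem : ∀ a : A, ∀ x ∈ I, circ (circ a x) (cinv a) ∈ I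

/-- An additive subgroup on which the two operations of the skew left brace agree. On a left ideal
this says that it is trivial as a skew left brace. -/
def IsTrivial (I : AddSubgroup A) : Prop := ∀ x ∈ I, ∀ y ∈ I, x + y = circ x y

section LeftIdeal

variable {I : AddSubgroup A}

theorem IsLeftIdeal.bstar_mem (hI : IsLeftIdeal I) (a : A) {x : A} (hx : x ∈ I) :
    bstar a x ∈ I :=
  sub_mem (hI a x hx) hx

theorem IsLeftIdeal.starSpan_le_self (hI : IsLeftIdeal I) (X : Set A) :
    starSpan X (I : Set A) ≤ I :=
  starSpan_le.2 fun a _ _ hx => hI.bstar_mem a hx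

theorem IsLeftIdeal.starSpan_univ (hI : IsLeftIdeal I) :
    IsLeftIdeal (starSpan Set.univ (I : Set A)) := by
  intro a
  suffices h : starSpan Set.univ (I : Set A) ≤ (starSpan Set.univ (I : Set A)).comap (lamHom a) from
    fun _ hz => h hz
  refine starSpan_le.2 fun b _ x hx => ?_
  change lam a (bstar b x) ∈ starSpan Set.univ (I : Set A)
  rw [lam_bstar]
  exact bstar_mem_starSpan (Set.mem_univ _) (hI a x hx)

theorem IsLeftIdeal.isIdeal (hI : IsLeftIdeal I) (hn : I.Normal)
    (hstar : ∀ x ∈ I, ∀ a : A, bstar x a ∈ I) : IsIdeal I := by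
  refine ⟨hI, hn, fun a x hx => ?_⟩
  have conj_eq : circ (circ a x) (cinv a) = a + lam a (x + bstar x (cinv a)) + -a := by
    rw [circ_eq_add_lam, lam_circ, circ_eq_add_lam, lam_eq_bstar_add x, ← lam_cinv_self, lam_add,
      lam_add]
    simp only [add_assoc]
  rw [conj_eq]
  exact hn.conj_mem _ (hI a _ (add_mem hx (hstar x hx _))) a

theorem IsTrivial.lam_eq (ht : IsTrivial I) {x y : A} (hx : x ∈ I) (hy : y ∈ I) :
    lam x y = y := by
  rw [lam, ← ht x hx y hy, neg_add_cancel_left]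

theorem IsTrivial.lam_add_eq (ht : IsTrivial I) (hI : IsLeftIdeal I) (a : A) {x y : A}
    (hx : x ∈ I) (hy : y ∈ I) : lam (a + x) y = lam a y := by
  rw [add_eq_circ_lam_cinv, lam_circ, ht.lam_eq (hI _ x hx) hy]

theorem isTrivial_of_le_lamKer (h : I ≤ lamKer A) : IsTrivial I := fun x hx y _ => by
  rw [circ_eq_add_lam, h hx y]

end LeftIdeal

section StarSq

variable (A) in
/-- The ideal `A^(2) = A * A`. -/
abbrev starSq : AddSubgroup A := starSpan Set.univ Set.univ

theorem bstar_mem_starSq (a b : A) : bstar a b ∈ starSq A :=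
  bstar_mem_starSpan (Set.mem_univ a) (Set.mem_univ b)

theorem starSq_normal : (starSq A).Normal :=
  AddSubgroup.normalizer_eq_top_iff.1 (top_unique (le_normalizer_starSpan Set.univ ⊤))

theorem isIdeal_starSq : IsIdeal (starSq A) := by
  have top_isLeftIdeal : IsLeftIdeal (⊤ : AddSubgroup A) := fun _ _ _ => AddSubgroup.mem_top _
  exact top_isLeftIdeal.starSpan_univ.isIdeal starSq_normal fun x _ a => bstar_mem_starSq x a

theorem neg_add_add_circ_mem_starSq (a b : A) : -(a + b) + circ a b ∈ starSq A := by
  have eq_conj : -(a + b) + circ a b = -b + bstar a b + - -b := by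
    rw [circ_eq_add_lam, lam_eq_bstar_add, neg_add_rev, neg_neg]
    simp only [add_assoc, neg_add_cancel_left]
  rw [eq_conj]
  exact starSq_normal.conj_mem _ (bstar_mem_starSq a b) (-b)

end StarSq

/-- A factorization `A = B + C` of a skew left brace by two left ideals which are trivial as skew
left braces. -/
structure IsTrivialFactorization (B C : AddSubgroup A) : Prop where
  isLeftIdeal_left : IsLeftIdeal B
  isLeftIdeal_right : IsLeftIdeal C
  isTrivial_left : IsTrivial B
  isTrivial_right : IsTrivial C
  exists_eq_add : ∀ a : A, ∃ b ∈ B, ∃ c ∈ C, a = b + c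

namespace IsTrivialFactorization

variable {B C : AddSubgroup A}

theorem symm (h : IsTrivialFactorization B C) : IsTrivialFactorization C B where
  isLeftIdeal_left := h.isLeftIdeal_right
  isLeftIdeal_right := h.isLeftIdeal_left
  isTrivial_left := h.isTrivial_right
  isTrivial_right := h.isTrivial_left
  exists_eq_add a := by
    obtain ⟨b, hb, c, hc, hbc⟩ := h.exists_eq_add (-a)
    exact ⟨-c, neg_mem hc, -b, neg_mem hb, by rw [← neg_add_rev, ← hbc, neg_neg]⟩

theorem sup_eq_top (h : IsTrivialFactorization B C) : B ⊔ C = ⊤ := by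
  refine top_unique fun a _ => ?_
  obtain ⟨b, hb, c, hc, rfl⟩ := h.exists_eq_add a
  exact AddSubgroup.add_mem_sup hb hc

theorem starSpan_univ_eq (h : IsTrivialFactorization B C) :
    starSpan Set.univ (C : Set A) = starSpan (B : Set A) (C : Set A) := by
  apply le_antisymm
  · refine starSpan_le.2 fun a _ c hc => ?_
    obtain ⟨b, hb, c', hc', rfl⟩ := h.exists_eq_add a
    rw [bstar, h.isTrivial_right.lam_add_eq h.isLeftIdeal_right b hc' hc]
    exact bstar_mem_starSpan hb hc
  · exact starSpan_le.2 fun b _ c hc => bstar_mem_starSpan (Set.mem_univ b) hc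

theorem bstar_right_mem_starSpan (h : IsTrivialFactorization B C) (a : A) {c : A} (hc : c ∈ C) :
    bstar a c ∈ starSpan (B : Set A) (C : Set A) :=
  h.starSpan_univ_eq ▸ bstar_mem_starSpan (Set.mem_univ a) hc

theorem isLeftIdeal_starSpan (h : IsTrivialFactorization B C) :
    IsLeftIdeal (starSpan (B : Set A) (C : Set A)) :=
  h.starSpan_univ_eq ▸ h.isLeftIdeal_right.starSpan_univ

theorem left_le_normalizer_starSpan (h : IsTrivialFactorization B C) :
    B ≤ AddSubgroup.normalizer (starSpan (B : Set A) (C : Set A)) := by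
  refine le_normalizer_starSpan_iff.2 fun b hb x hx c _ => ?_
  have bstar_eq_zero : ∀ b' ∈ B, bstar x b' = 0 := fun b' hb' => by
    rw [bstar, h.isTrivial_left.lam_eq hx hb', sub_self]
  obtain ⟨c', hc', b', hb', hbc⟩ := h.symm.exists_eq_add (b + c)
  have conj_eq : b + bstar x c + -b = bstar x c' := by
    calc b + bstar x c + -b = bstar x (c' + b') := by
          rw [add_bstar_add_neg, bstar_eq_zero b hb, neg_zero, zero_add, hbc]
      _ = bstar x c' := by
          rw [bstar_add, bstar_eq_zero b' hb', add_zero, add_neg_cancel, add_zero]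
  rw [conj_eq]
  exact bstar_mem_starSpan hx hc'

theorem starSpan_normal (h : IsTrivialFactorization B C) :
    (starSpan (B : Set A) (C : Set A)).Normal := by
  rw [← AddSubgroup.normalizer_eq_top_iff, ← top_le_iff, ← h.sup_eq_top]
  exact sup_le h.left_le_normalizer_starSpan (le_normalizer_starSpan _ C)

theorem starSq_le_sup (h : IsTrivialFactorization B C) :
    starSq A ≤ starSpan (C : Set A) (B : Set A) ⊔ starSpan (B : Set A) (C : Set A) := by
  refine starSpan_le.2 fun a _ w _ => ?_
  obtain ⟨b, hb, c, hc, rfl⟩ := h.exists_eq_add w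
  rw [bstar_add]
  exact AddSubgroup.add_mem_sup (h.symm.bstar_right_mem_starSpan a hb)
    (h.starSpan_normal.conj_mem _ (h.bstar_right_mem_starSpan a hc) b)

theorem exists_add_eq_of_mem_starSq (h : IsTrivialFactorization B C) {u : A}
    (hu : u ∈ starSq A) :
    ∃ x ∈ starSpan (C : Set A) (B : Set A), ∃ y ∈ starSpan (B : Set A) (C : Set A), x + y = u := by
  have := h.starSpan_normal
  exact AddSubgroup.mem_sup_of_normal_right.1 (h.starSq_le_sup hu)

theorem mem_lamKer_of_forall_lam_eq (h : IsTrivialFactorization B C) {k : A}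
    (hB : ∀ b ∈ B, lam k b = b) (hC : ∀ c ∈ C, lam k c = c) : k ∈ lamKer A := by
  intro a
  obtain ⟨b, hb, c, hc, rfl⟩ := h.exists_eq_add a
  rw [lam_add, hB b hb, hC c hc]

theorem inf_le_lamKer (h : IsTrivialFactorization B C) : B ⊓ C ≤ lamKer A := fun _ hk =>
  h.mem_lamKer_of_forall_lam_eq (fun _ => h.isTrivial_left.lam_eq hk.1)
    (fun _ => h.isTrivial_right.lam_eq hk.2)

theorem addCommutator_starSpan_le_lamKer (h : IsTrivialFactorization B C) :
    ⁅starSpan (C : Set A) (B : Set A), starSpan (B : Set A) (C : Set A)⁆ ≤ lamKer A := by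
  have := h.starSpan_normal
  have := h.symm.starSpan_normal
  calc ⁅starSpan (C : Set A) (B : Set A), starSpan (B : Set A) (C : Set A)⁆
      ≤ starSpan (C : Set A) (B : Set A) ⊓ starSpan (B : Set A) (C : Set A) :=
        AddSubgroup.addCommutator_le_inf _ _
    _ ≤ B ⊓ C :=
        inf_le_inf (h.isLeftIdeal_left.starSpan_le_self _) (h.isLeftIdeal_right.starSpan_le_self _)
    _ ≤ lamKer A := h.inf_le_lamKer

section Pieces

variable {x y : A}

theorem addCommutator_mem_lamKer (h : IsTrivialFactorization B C)
    (hx : x ∈ starSpan (C : Set A) (B : Set A)) (hy : y ∈ starSpan (B : Set A) (C : Set A)) :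
    ⁅x, y⁆ ∈ lamKer A :=
  h.addCommutator_starSpan_le_lamKer (AddSubgroup.addCommutator_mem_addCommutator hx hy)

theorem lam_lam_eq_lam (h : IsTrivialFactorization B C)
    (hx : x ∈ starSpan (C : Set A) (B : Set A)) (hy : y ∈ starSpan (B : Set A) (C : Set A))
    {b : A} (hb : b ∈ B) : lam (lam x y) b = lam y b := by
  have hxB : x ∈ B := h.isLeftIdeal_left.starSpan_le_self _ hx
  have hcomm : ⁅x, lam x y⁆ ∈ lamKer A :=
    h.addCommutator_mem_lamKer hx (h.isLeftIdeal_starSpan x y hy)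
  calc lam (lam x y) b = lam (lam x y + x) b :=
        (h.isTrivial_left.lam_add_eq h.isLeftIdeal_left _ hxB hb).symm
    _ = lam (⁅x, lam x y⁆ + (lam x y + x)) b := (lam_add_of_mem_lamKer hcomm _ b).symm
    _ = lam (circ x y) b := by
        simp only [addCommutatorElement_def, add_assoc, neg_add_cancel_left, neg_add_cancel,
          add_zero, circ_eq_add_lam]
    _ = lam y b := by
        rw [lam_circ, h.isTrivial_left.lam_eq hxB (h.isLeftIdeal_left y b hb)]

theorem bstar_mem_lamKer (h : IsTrivialFactorization B C)
    (hx : x ∈ starSpan (C : Set A) (B : Set A)) (hy : y ∈ starSpan (B : Set A) (C : Set A)) :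
    bstar x y ∈ lamKer A := by
  have hyC : y ∈ C := h.isLeftIdeal_right.starSpan_le_self _ hy
  have hxyC : bstar x y ∈ C := h.isLeftIdeal_right.bstar_mem x hyC
  refine h.mem_lamKer_of_forall_lam_eq (fun b hb => ?_) fun c hc => h.isTrivial_right.lam_eq hxyC hc
  have circ_eq_lam : circ (bstar x y) y = lam x y := by
    rw [← h.isTrivial_right _ hxyC _ hyC, ← lam_eq_bstar_add]
  have hb' : lam (cinv y) b ∈ B := h.isLeftIdeal_left _ b hb
  calc lam (bstar x y) b = lam (circ (bstar x y) y) (lam (cinv y) b) := by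
        rw [lam_circ, lam_lam_cinv]
    _ = b := by rw [circ_eq_lam, h.lam_lam_eq_lam hx hy hb', lam_lam_cinv]

theorem bstar_mem_lamKer_of_mem_starSq (h : IsTrivialFactorization B C) {u : A}
    (hu : u ∈ starSq A) (hy : y ∈ starSpan (B : Set A) (C : Set A)) : bstar u y ∈ lamKer A := by
  obtain ⟨x, hx, y', hy', rfl⟩ := h.exists_add_eq_of_mem_starSq hu
  have starSpan_le_C := h.isLeftIdeal_right.starSpan_le_self (B : Set A)
  have bstar_eq : bstar (x + y') y = bstar x y := by
    rw [bstar, h.isTrivial_right.lam_add_eq h.isLeftIdeal_right x (starSpan_le_C hy')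
      (starSpan_le_C hy), bstar]
  rw [bstar_eq]
  exact h.bstar_mem_lamKer hx hy

end Pieces

theorem starSpan_starSq_le_lamKer (h : IsTrivialFactorization B C) :
    starSpan (starSq A : Set A) (starSq A : Set A) ≤ lamKer A := by
  refine starSpan_le.2 fun u hu v hv => ?_
  obtain ⟨x, hx, y, hy, rfl⟩ := h.exists_add_eq_of_mem_starSq hv
  have hyC : y ∈ C := h.isLeftIdeal_right.starSpan_le_self _ hy
  have conj_eq : x + bstar u y + -x = ⁅x, bstar u y⁆ + bstar u y := by
    rw [addCommutatorElement_def, neg_add_cancel_right]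
  rw [bstar_add, conj_eq]
  exact add_mem (h.symm.bstar_mem_lamKer_of_mem_starSq hu hx)
    (add_mem (h.addCommutator_mem_lamKer hx (h.bstar_right_mem_starSpan u hyC))
      (h.bstar_mem_lamKer_of_mem_starSq hu hy))

theorem isTrivial_starSpan_starSq (h : IsTrivialFactorization B C) :
    IsTrivial (starSpan (starSq A : Set A) (starSq A : Set A)) :=
  isTrivial_of_le_lamKer h.starSpan_starSq_le_lamKer

end IsTrivialFactorization

end SkewBrace

/-- if `A = B + C` through (not necessarily strong) left ideals which are
trivial as skew braces, then `A^(2) = A*A` is an ideal of `A` which is meta-trivial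
(`A^(2) * A^(2)` is trivial as a skew brace), and the quotient `A/A^(2)` is trivial
(i.e. `-(a+b) + a∘b ∈ A^(2)` for all `a,b`). -/
theorem stmt10 {A : Type*} [SkewBrace A] (B C : AddSubgroup A)
    (hB : ∀ a : A, ∀ x ∈ B, lam a x ∈ B)
    (hC : ∀ a : A, ∀ x ∈ C, lam a x ∈ C)
    (hBtriv : ∀ x ∈ B, ∀ y ∈ B, x + y = circ x y)
    (hCtriv : ∀ x ∈ C, ∀ y ∈ C, x + y = circ x y)
    (hfact : ∀ a : A, ∃ b ∈ B, ∃ c ∈ C, a = b + c) :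
    (∀ a : A, ∀ x ∈ starSpan (Set.univ : Set A) (Set.univ : Set A),
       lam a x ∈ starSpan (Set.univ : Set A) (Set.univ : Set A)) ∧
    (starSpan (Set.univ : Set A) (Set.univ : Set A)).Normal ∧
    (∀ a : A, ∀ x ∈ starSpan (Set.univ : Set A) (Set.univ : Set A),
       circ (circ a x) (cinv a) ∈ starSpan (Set.univ : Set A) (Set.univ : Set A)) ∧
    (∀ x ∈ starSpan ((starSpan (Set.univ : Set A) (Set.univ : Set A) : AddSubgroup A) : Set A)
             ((starSpan (Set.univ : Set A) (Set.univ : Set A) : AddSubgroup A) : Set A),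
     ∀ y ∈ starSpan ((starSpan (Set.univ : Set A) (Set.univ : Set A) : AddSubgroup A) : Set A)
             ((starSpan (Set.univ : Set A) (Set.univ : Set A) : AddSubgroup A) : Set A),
       x + y = circ x y) ∧
    (∀ a b : A, -(a + b) + circ a b ∈ starSpan (Set.univ : Set A) (Set.univ : Set A)) := by
  have h : IsTrivialFactorization B C := ⟨hB, hC, hBtriv, hCtriv, hfact⟩
  obtain ⟨lam_mem, normal, circ_conj_mem⟩ := isIdeal_starSq (A := A)
  exact ⟨lam_mem, normal, circ_conj_mem, h.isTrivial_starSpan_starSq, neg_add_add_circ_mem_starSq⟩
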